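/- In the order-to-delivery CLog-net, the following invariant holds in every marking m reachable (for any catalog instance Cat) from an initial marking in which the places working, paid, ready, in-truck, delivered, in-house, and at-dest are empty and pool holds an arbitrary finite multiset of trucks: (1) every order identifier o occurs in m(working) + m(paid) with total multiplicity at most 1, and (2) whenever ⟨p,o,m'⟩ occurs in m(in-truck) or ⟨p,o⟩ occurs in m(delivered), the token ⟨o⟩ occurs in m(paid). -/

import Mathlib

/-- A marking of the order-to-delivery CLog-net: places `working`, `paid` of type
`Order`, `ready`, `delivered` of type `ProdType × Order`, `intruck` of type
`ProdType × Order × Plate`, and `pool`, `inhouse`, `atdest` of type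
`Plate × TruckType`. -/
structure OTDMarking (Order ProdType Plate TruckType : Type) where
  working : Multiset Order
  paid : Multiset Order
  ready : Multiset (ProdType × Order)
  intruck : Multiset (ProdType × Order × Plate)
  delivered : Multiset (ProdType × Order)
  pool : Multiset (Plate × TruckType)
  inhouse : Multiset (Plate × TruckType)
  atdest : Multiset (Plate × TruckType)

/-- A (finite) catalog instance over the schema
`{ProdCat(p : ProdType), Comp(c : CId, p : ProdType, t : TruckType)}`. -/
structure OTDCatalog (CId ProdType TruckType : Type) where
  prodCat : Finset ProdType
  comp : Finset (CId × ProdType × TruckType)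

/-- The `Order`-typed values occurring in a marking (the catalog contains no values
of type `Order`, the types being pairwise disjoint). -/
def orderVals {Order ProdType Plate TruckType : Type}
    (m : OTDMarking Order ProdType Plate TruckType) : Set Order :=
  {o | o ∈ m.working ∨ o ∈ m.paid ∨ (∃ p, (p, o) ∈ m.ready) ∨
       (∃ p pl, (p, o, pl) ∈ m.intruck) ∨ (∃ p, (p, o) ∈ m.delivered)}

/-- The firing steps of the order-to-delivery CLog-net, for a catalog instance
`Cat`. -/
inductive OTDStep {Order ProdType Plate TruckType CId : Type}
    [DecidableEq Order] [DecidableEq ProdType] [DecidableEq Plate]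
    [DecidableEq TruckType]
    (Cat : OTDCatalog CId ProdType TruckType) :
    OTDMarking Order ProdType Plate TruckType →
    OTDMarking Order ProdType Plate TruckType → Prop
  /-- (new order): output `⟨ν_o⟩` to `working`, with `ν_o` bound to a value fresh
  w.r.t. the current marking (and the catalog, which contains no orders). -/
  | newOrder (m : OTDMarking Order ProdType Plate TruckType) (o : Order)
      (hfresh : o ∉ orderVals m) :
      OTDStep Cat m { m with working := m.working + {o} }
  /-- (add item): consume and re-produce `⟨o⟩` on `working`, guard `ProdCat(p)`,
  output `⟨p,o⟩` to `ready`. -/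
  | addItem (m : OTDMarking Order ProdType Plate TruckType) (p : ProdType) (o : Order)
      (ho : o ∈ m.working) (hp : p ∈ Cat.prodCat) :
      OTDStep Cat m { m with ready := m.ready + {(p, o)} }
  /-- (rem): consume `⟨p,o⟩` from `ready`. -/
  | rem (m : OTDMarking Order ProdType Plate TruckType) (p : ProdType) (o : Order)
      (h : (p, o) ∈ m.ready) :
      OTDStep Cat m { m with ready := m.ready.erase (p, o) }
  /-- (pay): consume `⟨o⟩` from `working`, consume and re-produce `⟨p,o⟩` on `ready`,
  produce `⟨o⟩` in `paid`. -/
  | pay (m : OTDMarking Order ProdType Plate TruckType) (p : ProdType) (o : Order)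
      (ho : o ∈ m.working) (hr : (p, o) ∈ m.ready) :
      OTDStep Cat m { m with working := m.working.erase o, paid := m.paid + {o} }
  /-- (use): move `⟨pl,t⟩` from `pool` to `inhouse`. -/
  | use (m : OTDMarking Order ProdType Plate TruckType) (pl : Plate) (t : TruckType)
      (h : (pl, t) ∈ m.pool) :
      OTDStep Cat m
        { m with pool := m.pool.erase (pl, t), inhouse := m.inhouse + {(pl, t)} }
  /-- (load): consume `⟨p,o⟩` from `ready`, consume and re-produce `⟨pl,t⟩` on
  `inhouse` and `⟨o⟩` on `paid`, guard `∃c. Comp(c,p,t)`, produce `⟨p,o,pl⟩` in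
  `intruck`. -/
  | load (m : OTDMarking Order ProdType Plate TruckType) (p : ProdType) (o : Order)
      (pl : Plate) (t : TruckType)
      (hr : (p, o) ∈ m.ready) (hh : (pl, t) ∈ m.inhouse) (hpaid : o ∈ m.paid)
      (hguard : ∃ c : CId, (c, p, t) ∈ Cat.comp) :
      OTDStep Cat m
        { m with ready := m.ready.erase (p, o), intruck := m.intruck + {(p, o, pl)} }
  /-- (drop): consume `⟨p,o,pl⟩` from `intruck`, consume and re-produce `⟨pl,t⟩` on
  `inhouse`, produce `⟨p,o⟩` in `ready`. -/
  | drop (m : OTDMarking Order ProdType Plate TruckType) (p : ProdType) (o : Order)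
      (pl : Plate) (t : TruckType)
      (hi : (p, o, pl) ∈ m.intruck) (hh : (pl, t) ∈ m.inhouse) :
      OTDStep Cat m
        { m with intruck := m.intruck.erase (p, o, pl), ready := m.ready + {(p, o)} }
  /-- (drive): move `⟨pl,t⟩` from `inhouse` to `atdest` while consuming and
  re-producing some `⟨p,o,pl⟩` on `intruck`. -/
  | drive (m : OTDMarking Order ProdType Plate TruckType) (pl : Plate) (t : TruckType)
      (p : ProdType) (o : Order)
      (hh : (pl, t) ∈ m.inhouse) (hi : (p, o, pl) ∈ m.intruck) :
      OTDStep Cat m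
        { m with inhouse := m.inhouse.erase (pl, t), atdest := m.atdest + {(pl, t)} }
  /-- (move): consume and re-produce `⟨pl,t⟩` on `atdest`. -/
  | move (m : OTDMarking Order ProdType Plate TruckType) (pl : Plate) (t : TruckType)
      (h : (pl, t) ∈ m.atdest) :
      OTDStep Cat m m
  /-- (go back): move `⟨pl,t⟩` from `atdest` to `inhouse`. -/
  | goBack (m : OTDMarking Order ProdType Plate TruckType) (pl : Plate) (t : TruckType)
      (h : (pl, t) ∈ m.atdest) :
      OTDStep Cat m
        { m with atdest := m.atdest.erase (pl, t), inhouse := m.inhouse + {(pl, t)} }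
  /-- (deliver): consume `⟨p,o,pl⟩` from `intruck`, consume and re-produce `⟨pl,t⟩`
  on `atdest`, produce `⟨p,o⟩` in `delivered`. -/
  | deliver (m : OTDMarking Order ProdType Plate TruckType) (p : ProdType) (o : Order)
      (pl : Plate) (t : TruckType)
      (hi : (p, o, pl) ∈ m.intruck) (ha : (pl, t) ∈ m.atdest) :
      OTDStep Cat m
        { m with intruck := m.intruck.erase (p, o, pl),
                 delivered := m.delivered + {(p, o)} }

/-- The initial marking: all places empty except `pool`, which holds an arbitrary
finite multiset of trucks. -/
def OTDInit {Order ProdType Plate TruckType : Type}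
    (pool0 : Multiset (Plate × TruckType)) :
    OTDMarking Order ProdType Plate TruckType :=
  { working := 0, paid := 0, ready := 0, intruck := 0, delivered := 0,
    pool := pool0, inhouse := 0, atdest := 0 }

/-!
Each part of the invariant follows from the effect of a firing on one multiset of orders. Paying
moves an order from `working` to `paid`, so `working + paid` changes only when a fresh order is
created, and it stays duplicate-free. Delivering moves an order from a truck to `delivered`, so the
multiset of shipped orders grows only by loading, which tests that the order is paid; as no
transition consumes from `paid`, shipped orders remain paid.
-/

theorem erase_add_add_singleton {α : Type*} [DecidableEq α] {a : α} {s : Multiset α} (h : a ∈ s)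
    (t : Multiset α) : s.erase a + (t + {a}) = s + t := by
  calc
    s.erase a + (t + {a}) = ({a} + s.erase a) + t := by ac_rfl
    _ = s + t := by rw [Multiset.singleton_add, Multiset.cons_erase h]

namespace OTDMarking

variable {Order ProdType Plate TruckType : Type}

/-- The multiset of orders in `working` or `paid`, on which the invariant imposes uniqueness. -/
def placed (m : OTDMarking Order ProdType Plate TruckType) : Multiset Order :=
  m.working + m.paid

/-- The orders of the items in a truck or delivered, with one occurrence per item. -/
def shipped (m : OTDMarking Order ProdType Plate TruckType) : Multiset Order :=
  m.intruck.map (fun item => item.2.1) + m.delivered.map Prod.snd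

/-- The safety invariant of the net: no order is placed twice, and only paid orders are shipped. -/
structure Invariant (m : OTDMarking Order ProdType Plate TruckType) : Prop where
  placed_nodup : m.placed.Nodup
  shipped_subset_paid : m.shipped ⊆ m.paid

theorem mem_shipped {m : OTDMarking Order ProdType Plate TruckType} {o : Order} :
    o ∈ m.shipped ↔ (∃ p pl, (p, o, pl) ∈ m.intruck) ∨ ∃ p, (p, o) ∈ m.delivered := by
  simp [shipped]

theorem shipped_subset_paid_iff {m : OTDMarking Order ProdType Plate TruckType} :
    m.shipped ⊆ m.paid ↔
      (∀ p o pl, (p, o, pl) ∈ m.intruck → o ∈ m.paid) ∧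
        ∀ p o, (p, o) ∈ m.delivered → o ∈ m.paid := by
  simp only [Multiset.subset_iff, mem_shipped]
  grind

theorem invariant_iff [DecidableEq Order] {m : OTDMarking Order ProdType Plate TruckType} :
    m.Invariant ↔
      (∀ o, m.working.count o + m.paid.count o ≤ 1) ∧
        (∀ p o pl, (p, o, pl) ∈ m.intruck → o ∈ m.paid) ∧
          ∀ p o, (p, o) ∈ m.delivered → o ∈ m.paid := by
  simp only [← shipped_subset_paid_iff, ← Multiset.count_add]
  rw [← Multiset.nodup_iff_count_le_one]
  exact ⟨fun h => ⟨h.placed_nodup, h.shipped_subset_paid⟩, fun h => ⟨h.1, h.2⟩⟩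

theorem invariant_init (pool0 : Multiset (Plate × TruckType)) :
    (OTDInit pool0 : OTDMarking Order ProdType Plate TruckType).Invariant where
  placed_nodup := Multiset.nodup_zero
  shipped_subset_paid := Multiset.zero_subset _

end OTDMarking

namespace OTDStep

variable {Order ProdType Plate TruckType CId : Type}
  [DecidableEq Order] [DecidableEq ProdType] [DecidableEq Plate] [DecidableEq TruckType]
  {Cat : OTDCatalog CId ProdType TruckType} {m m' : OTDMarking Order ProdType Plate TruckType}

theorem placed_eq_or_eq_cons (h : OTDStep Cat m m') :
    m'.placed = m.placed ∨ ∃ o ∉ m.placed, m'.placed = o ::ₘ m.placed := by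
  cases h with
  | newOrder o hfresh =>
    have hnew : o ∉ m.placed := fun ho =>
      hfresh ((Multiset.mem_add.mp ho).imp_right Or.inl)
    refine .inr ⟨o, hnew, ?_⟩
    simp only [OTDMarking.placed, ← Multiset.singleton_add]
    ac_rfl
  | pay p o ho => exact .inl (erase_add_add_singleton ho m.paid)
  | _ => exact .inl rfl

theorem paid_le (h : OTDStep Cat m m') : m.paid ≤ m'.paid := by
  cases h with
  | pay => exact Multiset.le_add_right _ _
  | _ => exact le_rfl

theorem shipped_le_or_eq_cons (h : OTDStep Cat m m') :
    m'.shipped ≤ m.shipped ∨ ∃ o ∈ m.paid, m'.shipped = o ::ₘ m.shipped := by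
  cases h with
  | load p o pl t _ _ hpaid =>
    refine .inr ⟨o, hpaid, ?_⟩
    simp only [OTDMarking.shipped, Multiset.map_add, Multiset.map_singleton,
      ← Multiset.singleton_add]
    ac_rfl
  | drop p o pl t =>
    have hle : m.intruck.erase (p, o, pl) ≤ m.intruck := Multiset.erase_le _ _
    exact .inl (add_le_add_left (Multiset.map_le_map hle) _)
  | deliver p o pl t hi =>
    have ho : o ∈ m.intruck.map (fun item => item.2.1) := Multiset.mem_map_of_mem _ hi
    simp only [OTDMarking.shipped, Multiset.map_add, Multiset.map_singleton]
    rw [Multiset.map_erase_of_mem _ _ hi, erase_add_add_singleton ho]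
    exact .inl le_rfl
  | _ => exact .inl le_rfl

theorem invariant (h : OTDStep Cat m m') (hm : m.Invariant) : m'.Invariant where
  placed_nodup := by
    rcases h.placed_eq_or_eq_cons with heq | ⟨o, ho, heq⟩
    · exact heq ▸ hm.placed_nodup
    · exact heq ▸ Multiset.nodup_cons.mpr ⟨ho, hm.placed_nodup⟩
  shipped_subset_paid := by
    have hpaid : m'.shipped ⊆ m.paid := by
      rcases h.shipped_le_or_eq_cons with hle | ⟨o, ho, heq⟩
      · exact Multiset.Subset.trans (Multiset.subset_of_le hle) hm.shipped_subset_paid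
      · exact heq ▸ Multiset.cons_subset.mpr ⟨ho, hm.shipped_subset_paid⟩
    exact Multiset.Subset.trans hpaid (Multiset.subset_of_le h.paid_le)

end OTDStep

theorem otd_invariant_general {Order ProdType Plate TruckType CId : Type}
    [DecidableEq Order] [DecidableEq ProdType] [DecidableEq Plate] [DecidableEq TruckType]
    {Cat : OTDCatalog CId ProdType TruckType}
    {m₀ m : OTDMarking Order ProdType Plate TruckType} (h₀ : m₀.Invariant)
    (hreach : Relation.ReflTransGen (OTDStep Cat) m₀ m) : m.Invariant := by
  induction hreach with
  | refl => exact h₀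
  | tail _ hstep ih => exact hstep.invariant ih

/-- In the order-to-delivery CLog-net, every reachable marking `m`
(for any catalog instance) satisfies the invariant: (1) every order identifier `o`
occurs in `m(working) + m(paid)` with total multiplicity at most 1, and (2) whenever
`⟨p,o,pl⟩` occurs in `m(in-truck)` or `⟨p,o⟩` occurs in `m(delivered)`, the token
`⟨o⟩` occurs in `m(paid)`. -/
theorem otd_invariant {Order ProdType Plate TruckType CId : Type}
    [DecidableEq Order] [DecidableEq ProdType] [DecidableEq Plate]
    [DecidableEq TruckType]
    [Countable Order] [Infinite Order] [Countable Plate] [Infinite Plate]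
    (Cat : OTDCatalog CId ProdType TruckType)
    (pool0 : Multiset (Plate × TruckType))
    (m : OTDMarking Order ProdType Plate TruckType)
    (hreach : Relation.ReflTransGen (OTDStep Cat) (OTDInit pool0) m) :
    (∀ o : Order, m.working.count o + m.paid.count o ≤ 1) ∧
    (∀ (p : ProdType) (o : Order) (pl : Plate), (p, o, pl) ∈ m.intruck → o ∈ m.paid) ∧
    (∀ (p : ProdType) (o : Order), (p, o) ∈ m.delivered → o ∈ m.paid) := by
  exact OTDMarking.invariant_iff.mp
    (otd_invariant_general (OTDMarking.invariant_init pool0) hreach)
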